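/- Let 𝒞 ⊆ 𝒟 ⊆ 𝕄 be sum-rank metric codes with 𝒞 nonzero and assume that 𝒟 is an MSRD code. Then the sequence (d_1(𝒞), ..., d_{dim 𝒞}(𝒞)) of generalized sum-rank weights of 𝒞 is a subsequence of the sequence (d_1(𝒟), ..., d_{dim 𝒟}(𝒟)) of generalized sum-rank weights of 𝒟. -/

import Mathlib

open Module

variable {F : Type*} [Field F] [Fintype F] {t : ℕ} {m n : Fin t → ℕ}

/-- The sum-rank weight of an element of `𝕄 = F^{m 0 × n 0} × ⋯ × F^{m (t-1) × n (t-1)}`. -/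
noncomputable def srk (C : ∀ i : Fin t, Matrix (Fin (m i)) (Fin (n i)) F) : ℕ :=
  ∑ i, (C i).rank

/-- The maximum sum-rank of a code. -/
noncomputable def maxsrk (𝒞 : Submodule F (∀ i : Fin t, Matrix (Fin (m i)) (Fin (n i)) F)) : ℕ :=
  sSup {w | ∃ C ∈ 𝒞, srk C = w}

/-- The minimum distance of a code. -/
noncomputable def minDist (𝒞 : Submodule F (∀ i : Fin t, Matrix (Fin (m i)) (Fin (n i)) F)) : ℕ :=
  sInf {w | ∃ C ∈ 𝒞, C ≠ 0 ∧ srk C = w}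

/-- The maximum rank of a subspace of a matrix space. -/
noncomputable def maxrank {a b : ℕ} (𝒜 : Submodule F (Matrix (Fin a) (Fin b) F)) : ℕ :=
  sSup {w | ∃ A ∈ 𝒜, A.rank = w}

/-- Optimal anticodes in a single matrix space. -/
def IsOptAnticode {a b : ℕ} (𝒜 : Submodule F (Matrix (Fin a) (Fin b) F)) : Prop :=
  Module.finrank F 𝒜 = a * maxrank 𝒜

/-- The weight of a sum-rank metric code: the minimum of `maxsrk` over products of
optimal anticodes containing it. -/
noncomputable def codeWt (𝒞 : Submodule F (∀ i : Fin t, Matrix (Fin (m i)) (Fin (n i)) F)) : ℕ :=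
  sInf {w | ∃ 𝒜 : ∀ i : Fin t, Submodule F (Matrix (Fin (m i)) (Fin (n i)) F),
    (∀ i, IsOptAnticode (𝒜 i)) ∧ 𝒞 ≤ Submodule.pi Set.univ 𝒜 ∧
      maxsrk (Submodule.pi Set.univ 𝒜) = w}

/-- The `r`-th generalized sum-rank weight of a code. -/
noncomputable def gw (𝒞 : Submodule F (∀ i : Fin t, Matrix (Fin (m i)) (Fin (n i)) F))
    (r : ℕ) : ℕ :=
  sInf {w | ∃ 𝒟 : Submodule F (∀ i : Fin t, Matrix (Fin (m i)) (Fin (n i)) F),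
    𝒟 ≤ 𝒞 ∧ r ≤ Module.finrank F 𝒟 ∧ codeWt 𝒟 = w}

/-- Maximum sum-rank distance (MSRD) codes. -/
def IsMSRD (𝒞 : Submodule F (∀ i : Fin t, Matrix (Fin (m i)) (Fin (n i)) F)) : Prop :=
  ∃ j : Fin t, ∃ δ : ℕ, δ + 1 ≤ n j ∧
    minDist 𝒞 = ∑ i ∈ Finset.Iio j, n i + δ + 1 ∧
    Module.finrank F 𝒞 + δ * m j = ∑ i ∈ Finset.Ici j, m i * n i

/-- `d` is a subsequence of `e`. -/
def IsSubseq {k K : ℕ} (d : Fin k → ℕ) (e : Fin K → ℕ) : Prop :=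
  ∃ φ : Fin k → Fin K, StrictMono φ ∧ ∀ r, d r = e (φ r)

/-!
In any code, each positive value `w` is taken at most `columnHeight m n w` times by the generalized
weights. Indeed, a space of matrices of rank at most `r` whose dimension is the largest possible
contains such a space for `r - 1`: the shape of these spaces becomes visible after moving a matrix
of rank `r` to the corner `fromBlocks 1 0 0 0`. Hence a subcode of weight `w` can be cut down to
smaller weight by giving up at most `columnHeight m n w` dimensions.

The weights of a code contained in an MSRD code `𝒟` lie between `minDist 𝒟` and `∑ i, n i`, and the
dimension of `𝒟` is the sum of the column heights over this range. So for `𝒟` itself each bound is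
attained, and every value occurs among the weights of a subcode at most as often as among those of
`𝒟`. As both sequences are nondecreasing, this makes one a subsequence of the other.
-/

section FinSequences

lemma card_le_of_forall_lt_add {N h : ℕ} {s : Finset (Fin N)}
    (hs : ∀ a ∈ s, ∀ b ∈ s, (b : ℕ) < a + h) : s.card ≤ h := by
  obtain rfl | hne := s.eq_empty_or_nonempty
  · simp
  have hsub : s.map Fin.valEmbedding ⊆ Finset.Ico (s.min' hne) (s.min' hne + h) := by
    intro _ hmem
    obtain ⟨b, hb, rfl⟩ := Finset.mem_map.1 hmem
    exact Finset.mem_Ico.2 ⟨s.min'_le b hb, hs _ (s.min'_mem hne) b hb⟩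
  simpa using Finset.card_le_card hsub

lemma isSubseq_of_card_fiber_le {k l : ℕ} {d : Fin k → ℕ} {e : Fin l → ℕ} (hd : Monotone d)
    (he : Monotone e)
    (hcard : ∀ r, Finset.card {s | d s = d r} ≤ Finset.card {s | e s = d r}) : IsSubseq d e := by
  have count_ofFn {k : ℕ} (d : Fin k → ℕ) (a : ℕ) :
      (List.ofFn d).count a = Finset.card {s | d s = a} := by
    rw [← Multiset.coe_count, ← Fin.univ_val_map, Multiset.count_map]
    simp_rw [eq_comm (a := a)]
    rfl
  have hsubperm : (List.ofFn d).Subperm (List.ofFn e) := by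
    refine List.subperm_ext_iff.2 fun a ha ↦ ?_
    obtain ⟨r, rfl⟩ := List.mem_ofFn.1 ha
    simpa only [count_ofFn] using hcard r
  obtain ⟨φ, hφ⟩ := List.sublist_iff_exists_fin_orderEmbedding_get_eq.1 <|
    List.sublist_of_subperm_of_sortedLE hsubperm hd.sortedLE_ofFn he.sortedLE_ofFn
  refine ⟨fun r ↦ (φ (r.cast List.length_ofFn.symm)).cast List.length_ofFn, ?_, fun r ↦ ?_⟩
  · exact fun r s hrs ↦ φ.strictMono hrs
  · simpa only [List.get_ofFn, Fin.cast_cast, Fin.cast_eq_self] using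
      hφ (r.cast List.length_ofFn.symm)

end FinSequences

section Columns

variable {ι : Type*} [LinearOrder ι] [LocallyFiniteOrderBot ι]

/-- The columns of the `i`-th of a sequence of adjacent blocks with `n k` columns each, all columns
being numbered consecutively from `1`. -/
def blockColumns (n : ι → ℕ) (i : ι) : Finset ℕ :=
  Finset.Ioc (∑ k ∈ Finset.Iio i, n k) (∑ k ∈ Finset.Iic i, n k)

lemma card_blockColumns (n : ι → ℕ) (i : ι) : (blockColumns n i).card = n i := by
  rw [blockColumns, Nat.card_Ioc, ← Finset.sum_Iio_add_eq_sum_Iic, Nat.add_sub_cancel_left]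

lemma sum_Iic_le_sum_Iio {i j : ι} (n : ι → ℕ) (hij : i < j) :
    ∑ k ∈ Finset.Iic i, n k ≤ ∑ k ∈ Finset.Iio j, n k :=
  Finset.sum_le_sum_of_subset fun _ hk ↦ Finset.mem_Iio.2 ((Finset.mem_Iic.1 hk).trans_lt hij)

lemma exists_mem_blockColumns [Fintype ι] {n : ι → ℕ} {w : ℕ} (hw : 0 < w)
    (hle : w ≤ ∑ i, n i) : ∃ i, w ∈ blockColumns n i := by
  have exists_le_sum_Iic (s : Finset ι) (hs : w ≤ ∑ i ∈ s, n i) :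
      ∃ l ∈ s, w ≤ ∑ k ∈ Finset.Iic l, n k := by
    have hne : s.Nonempty := Finset.nonempty_of_sum_ne_zero (hw.trans_le hs).ne'
    exact ⟨s.max' hne, s.max'_mem hne, hs.trans <|
      Finset.sum_le_sum_of_subset fun k hk ↦ Finset.mem_Iic.2 (s.le_max' k hk)⟩
  obtain ⟨l, -, hl⟩ := exists_le_sum_Iic Finset.univ hle
  obtain ⟨i, hi, hmin⟩ :=
    exists_minimal_of_wellFoundedLT (fun i ↦ w ≤ ∑ k ∈ Finset.Iic i, n k) ⟨l, hl⟩
  refine ⟨i, Finset.mem_Ioc.2 ⟨lt_of_not_ge fun hcon ↦ ?_, hi⟩⟩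
  obtain ⟨l, hli, hl⟩ := exists_le_sum_Iic _ hcon
  exact (Finset.mem_Iio.1 hli).not_ge (hmin hl (Finset.mem_Iio.1 hli).le)

variable [Fintype ι] {m n : ι → ℕ}

/-- The number of rows of the block containing column `w`, for adjacent blocks of sizes `m i × n i`
whose columns are numbered consecutively from `1`. The sum has a single term, or none if there is
no column `w`, in which case the height is `0`. -/
def columnHeight (m n : ι → ℕ) (w : ℕ) : ℕ :=
  ∑ i with w ∈ blockColumns n i, m i

lemma le_columnHeight (hm : Antitone m) {w : ℕ} {i : ι} (hw : 0 < w)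
    (hi : w ≤ ∑ k ∈ Finset.Iic i, n k) : m i ≤ columnHeight m n w := by
  obtain ⟨l, hl⟩ := exists_mem_blockColumns hw
    (hi.trans (Finset.sum_le_sum_of_subset (Finset.subset_univ _)))
  have hli : l ≤ i := le_of_not_gt fun hil ↦
    (Finset.mem_Ioc.1 hl).1.not_ge (hi.trans (sum_Iic_le_sum_Iio n hil))
  exact (hm hli).trans <| Finset.single_le_sum (f := m) (fun _ _ ↦ Nat.zero_le _)
    (Finset.mem_filter.2 ⟨Finset.mem_univ l, hl⟩)

lemma sum_columnHeight_eq_sum_card_mul (m n : ι → ℕ) (s : Finset ℕ) :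
    ∑ w ∈ s, columnHeight m n w = ∑ i, (s ∩ blockColumns n i).card * m i := by
  simp_rw [columnHeight, Finset.sum_filter]
  rw [Finset.sum_comm]
  simp_rw [← Finset.sum_filter, Finset.filter_mem_eq_inter, Finset.sum_const, smul_eq_mul]

lemma sum_columnHeight_add_le [LocallyFiniteOrderTop ι] {j : ι} {δ : ℕ} (hδ : δ ≤ n j) (N : ℕ) :
    ∑ w ∈ Finset.Icc (∑ i ∈ Finset.Iio j, n i + δ + 1) N, columnHeight m n w + δ * m j ≤
      ∑ i ∈ Finset.Ici j, m i * n i := by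
  rw [Finset.Icc_add_one_left_eq_Ioc]
  set s := Finset.Ioc (∑ i ∈ Finset.Iio j, n i + δ) N
  have hbefore (i : ι) (hi : i ∉ Finset.Ici j) : (s ∩ blockColumns n i).card * m i = 0 := by
    have hij := sum_Iic_le_sum_Iio n (lt_of_not_ge (mt Finset.mem_Ici.2 hi))
    rw [Finset.card_eq_zero.2, zero_mul]
    refine Finset.eq_empty_of_forall_notMem fun w hw ↦ ?_
    simp only [s, blockColumns, Finset.mem_inter, Finset.mem_Ioc] at hw
    omega
  have hcard (i : ι) : (s ∩ blockColumns n i).card ≤ n i :=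
    (Finset.card_le_card Finset.inter_subset_right).trans_eq (card_blockColumns n i)
  have hcard_self : (s ∩ blockColumns n j).card + δ ≤ n j := by
    have hsub : s ∩ blockColumns n j ⊆
        Finset.Ioc (∑ i ∈ Finset.Iio j, n i + δ) (∑ i ∈ Finset.Iic j, n i) := by
      rw [blockColumns, Finset.Ioc_inter_Ioc]
      exact Finset.Ioc_subset_Ioc le_sup_left inf_le_right
    have hle := Finset.card_le_card hsub
    rw [Nat.card_Ioc, ← Finset.sum_Iio_add_eq_sum_Iic] at hle
    omega
  rw [sum_columnHeight_eq_sum_card_mul,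
    ← Finset.sum_subset (Finset.subset_univ (Finset.Ici j)) fun i _ hi ↦ hbefore i hi,
    ← Finset.sum_Ioi_add_eq_sum_Ici, ← Finset.sum_Ioi_add_eq_sum_Ici, add_assoc, ← add_mul,
    mul_comm (m j)]
  refine add_le_add (Finset.sum_le_sum fun i _ ↦ ?_) (Nat.mul_le_mul_right _ hcard_self)
  rw [mul_comm (m i)]
  exact Nat.mul_le_mul_right _ (hcard i)

end Columns

section Finrank

variable {K V W : Type*} [Field K] [AddCommGroup V] [Module K V] [AddCommGroup W] [Module K W]
  [FiniteDimensional K V]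

lemma finrank_map_add_finrank_inf_ker (f : V →ₗ[K] W) (S : Submodule K V) :
    finrank K (S.map f) + finrank K (S ⊓ LinearMap.ker f : Submodule K V) = finrank K S := by
  rw [← (f.domRestrict S).finrank_range_add_finrank_ker, LinearMap.range_domRestrict,
    LinearMap.ker_domRestrict, ← Submodule.map_comap_subtype, Submodule.finrank_map_subtype_eq]

lemma finrank_add_le_finrank_inf_comap_add [FiniteDimensional K W] (f : V →ₗ[K] W)
    {S : Submodule K V} {A B : Submodule K W} (hSA : S.map f ≤ A) (hBA : B ≤ A) :
    finrank K S + finrank K B ≤ finrank K (S ⊓ B.comap f : Submodule K V) + finrank K A := by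
  have hS := finrank_map_add_finrank_inf_ker f S
  have hS' := finrank_map_add_finrank_inf_ker f (S ⊓ B.comap f)
  have hker : S ⊓ B.comap f ⊓ LinearMap.ker f = S ⊓ LinearMap.ker f := by
    rw [inf_assoc, inf_eq_right.2 (LinearMap.ker_le_comap f)]
  rw [← Submodule.map_inf_eq_map_inf_comap, hker] at hS'
  have hsup := Submodule.finrank_sup_add_finrank_inf_eq (S.map f) B
  have hle := Submodule.finrank_mono (sup_le hSA hBA)
  omega

end Finrank

section MatrixSpaces

open Matrix

variable {K ι κ : Type*} [Field K] [Fintype ι]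

lemma finrank_add_finrank_le_of_mul_eq_zero [Fintype κ] {S : Submodule K (Matrix κ ι K)}
    {T : Submodule K (Matrix ι κ K)} (h : ∀ B ∈ S, ∀ C ∈ T, B * C = 0) :
    finrank K S + finrank K T ≤ Fintype.card ι * Fintype.card κ := by
  let φ : Matrix κ ι K →ₗ[K] Dual K (Matrix ι κ K) :=
    LinearMap.mk₂ K (fun B C ↦ (B * C).trace) (by simp [Matrix.add_mul]) (by simp)
      (by simp [Matrix.mul_add]) (by simp)
  have hφ : Function.Injective φ := fun B B' hBB' ↦
    ext_iff_trace_mul_right.2 fun C ↦ LinearMap.congr_fun hBB' C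
  have hST : S.map φ ≤ T.dualAnnihilator := by
    rintro _ ⟨B, hB, rfl⟩
    rw [Submodule.mem_dualAnnihilator]
    intro C hC
    simp [φ, h B hB C hC]
  have hT := Subspace.finrank_add_finrank_dualAnnihilator_eq T
  rw [finrank_matrix, finrank_self, mul_one] at hT
  have hS := (Submodule.equivMapOfInjective φ hφ S).finrank_eq
  have := Submodule.finrank_mono hST
  omega

variable [DecidableEq ι]

/-- The span of the units contains `single i j 1` for `i ≠ j`, as a difference of a transvection and
`1`, hence also `single i i 1`, as the missing term in the product of two transvections. -/
lemma span_isUnit_eq_top : Submodule.span K {X : Matrix ι ι K | IsUnit X} = ⊤ := by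
  set S := Submodule.span K {X : Matrix ι ι K | IsUnit X}
  have unit_mem {X : Matrix ι ι K} (hX : IsUnit X) : X ∈ S := Submodule.subset_span hX
  have isUnit_transvection {i j : ι} (hij : i ≠ j) : IsUnit (transvection i j (1 : K)) := by
    rw [isUnit_iff_isUnit_det, det_transvection_of_ne i j hij]
    exact isUnit_one
  have single_mem_of_ne {i j : ι} (hij : i ≠ j) : single i j (1 : K) ∈ S := by
    simpa [transvection] using
      S.sub_mem (unit_mem (isUnit_transvection hij)) (unit_mem isUnit_one)
  have single_self_mem (i : ι) : single i i (1 : K) ∈ S := by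
    obtain hι | hι := subsingleton_or_nontrivial ι
    · convert unit_mem isUnit_one using 1
      ext a b
      obtain rfl := Subsingleton.elim i a
      obtain rfl := Subsingleton.elim i b
      simp
    · obtain ⟨k, hki⟩ := exists_ne i
      have hprod : transvection i k (1 : K) * transvection k i 1 =
          1 + single k i 1 + single i k 1 + single i i 1 := by
        simp only [transvection, add_mul, mul_add, one_mul, mul_one, single_mul_single_same]
        abel
      have hmem := unit_mem ((isUnit_transvection hki.symm).mul (isUnit_transvection hki))
      rwa [hprod, S.add_mem_iff_right (S.add_mem (S.add_mem (unit_mem isUnit_one)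
        (single_mem_of_ne hki)) (single_mem_of_ne hki.symm))] at hmem
  refine eq_top_iff.2 fun X _ ↦ ?_
  rw [matrix_eq_sum_single X]
  refine S.sum_mem fun i _ ↦ S.sum_mem fun j _ ↦ ?_
  have hsingle : single i j (1 : K) ∈ S := by
    by_cases hij : i = j
    · exact hij ▸ single_self_mem i
    · exact single_mem_of_ne hij
  simpa using S.smul_mem (X i j) hsingle

/-- Schur complements: a matrix with invertible top-left block has no larger rank than this block
only if the Schur complement vanishes. -/
lemma eq_mul_inv_mul_of_rank_fromBlocks_le {μ : Type*} [Fintype μ] {X : Matrix ι ι K}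
    {C : Matrix ι μ K} {B : Matrix κ ι K} {D : Matrix κ μ K} (hX : IsUnit X)
    (h : (fromBlocks X C B D).rank ≤ Fintype.card ι) : D = B * X⁻¹ * C := by
  have := hX.invertible
  rw [← sub_eq_zero]
  by_contra hne
  obtain ⟨k, l, hkl⟩ : ∃ k l, (D - B * X⁻¹ * C) k l ≠ 0 := by
    by_contra! hzero
    exact hne (Matrix.ext hzero)
  let row : ι ⊕ Unit → ι ⊕ κ := Sum.map id fun _ ↦ k
  let col : ι ⊕ Unit → ι ⊕ μ := Sum.map id fun _ ↦ l
  have hsub : (fromBlocks X C B D).submatrix row col =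
      fromBlocks X (C.submatrix id fun _ ↦ l) (B.submatrix (fun _ ↦ k) id)
        (D.submatrix (fun _ ↦ k) fun _ ↦ l) := by
    ext (a | a) (b | b) <;> rfl
  have hdet : ((fromBlocks X C B D).submatrix row col).det ≠ 0 := by
    rw [hsub, det_fromBlocks₁₁, invOf_eq_nonsing_inv]
    refine mul_ne_zero ((isUnit_iff_isUnit_det X).1 hX).ne_zero ?_
    rwa [det_unique]
  have hrank := rank_submatrix_le (fromBlocks X C B D) row col
  rw [rank_of_det_ne_zero hdet, Fintype.card_sum, Fintype.card_unit] at hrank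
  omega

end MatrixSpaces

section BlockSpaces

open Matrix

variable {K : Type*} [Field K]

/-- `Matrix.submatrix` as a linear map; it is used to extract blocks, rows and columns. -/
def submatrixLinearMap (K : Type*) [Field K] {α β α' β' : Type*} (row : α' → α) (col : β' → β) :
    Matrix α β K →ₗ[K] Matrix α' β' K where
  toFun A := A.submatrix row col
  map_add' _ _ := rfl
  map_smul' _ _ := rfl

lemma eq_zero_or_eq_zero_of_forall_mul_mul_eq_zero {α β γ δ : Type*} [Fintype β] [Fintype γ]
    {B : Matrix α β K} {C : Matrix γ δ K} (h : ∀ Y : Matrix β γ K, B * Y * C = 0) :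
    B = 0 ∨ C = 0 := by
  classical
  by_contra! hBC
  obtain ⟨k, i, hki⟩ : ∃ k i, B k i ≠ 0 := by
    by_contra! hB
    exact hBC.1 (Matrix.ext hB)
  obtain ⟨j, l, hjl⟩ : ∃ j l, C j l ≠ 0 := by
    by_contra! hC
    exact hBC.2 (Matrix.ext hC)
  have hentry := congrFun₂ (h (single i j 1)) k l
  simp [Matrix.mul_apply, single_apply, ite_and, hki, hjl] at hentry

variable {ι κ : Type*} {𝒜 : Submodule K (Matrix (ι ⊕ κ) (ι ⊕ κ) K)}

/-- The bottom-left blocks of the elements of `𝒜` whose top-left block is zero. -/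
def bottomLeftBlocks (𝒜 : Submodule K (Matrix (ι ⊕ κ) (ι ⊕ κ) K)) : Submodule K (Matrix κ ι K) :=
  (𝒜 ⊓ LinearMap.ker (submatrixLinearMap K Sum.inl Sum.inl)).map
    (submatrixLinearMap K Sum.inr Sum.inl)

/-- The top-right blocks of the elements of `𝒜` whose two left blocks are zero. -/
def topRightBlocks (𝒜 : Submodule K (Matrix (ι ⊕ κ) (ι ⊕ κ) K)) : Submodule K (Matrix ι κ K) :=
  (𝒜 ⊓ LinearMap.ker (submatrixLinearMap K Sum.inl Sum.inl) ⊓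
    LinearMap.ker (submatrixLinearMap K Sum.inr Sum.inl)).map (submatrixLinearMap K Sum.inl Sum.inr)

lemma mem_bottomLeftBlocks {B : Matrix κ ι K} :
    B ∈ bottomLeftBlocks 𝒜 ↔ ∃ C D, fromBlocks 0 C B D ∈ 𝒜 := by
  constructor
  · rintro ⟨A, ⟨hA, hA₁₁ : A.toBlocks₁₁ = 0⟩, rfl⟩
    refine ⟨A.toBlocks₁₂, A.toBlocks₂₂, ?_⟩
    rwa [SetLike.mem_coe, ← fromBlocks_toBlocks A, hA₁₁] at hA
  · rintro ⟨C, D, hA⟩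
    exact ⟨_, ⟨hA, rfl⟩, rfl⟩

lemma mem_topRightBlocks {C : Matrix ι κ K} :
    C ∈ topRightBlocks 𝒜 ↔ ∃ D, fromBlocks 0 C 0 D ∈ 𝒜 := by
  constructor
  · rintro ⟨A, ⟨⟨hA, hA₁₁ : A.toBlocks₁₁ = 0⟩, hA₂₁ : A.toBlocks₂₁ = 0⟩, rfl⟩
    refine ⟨A.toBlocks₂₂, ?_⟩
    rwa [SetLike.mem_coe, ← fromBlocks_toBlocks A, hA₁₁, hA₂₁] at hA
  · rintro ⟨D, hA⟩
    exact ⟨_, ⟨⟨hA, rfl⟩, rfl⟩, rfl⟩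

variable [Fintype ι] [Fintype κ]

/-- Polarisation of `D = B * Y * C`, which holds for the elements of `𝒜` whose top-left block is
`Y⁻¹`. -/
lemma mul_mul_add_mul_mul_eq_zero (hr : ∀ A ∈ 𝒜, A.rank ≤ Fintype.card ι)
    (hsurj : ∀ X, ∃ C B D, fromBlocks X C B D ∈ 𝒜)
    {C C' : Matrix ι κ K} {B B' : Matrix κ ι K} {D D' : Matrix κ κ K}
    (h : fromBlocks 0 C B D ∈ 𝒜) (h' : fromBlocks 0 C' B' D' ∈ 𝒜) (Y : Matrix ι ι K) :
    B * Y * C' + B' * Y * C = 0 := by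
  classical
  have hY : Y ∈ Submodule.span K {X : Matrix ι ι K | IsUnit X} :=
    span_isUnit_eq_top (K := K) (ι := ι) ▸ Submodule.mem_top
  induction hY using Submodule.span_induction with
  | mem Y hY =>
    obtain ⟨C₀, B₀, D₀, h₀⟩ := hsurj Y⁻¹
    have schur {C₁ B₁ D₁} (h₁ : fromBlocks Y⁻¹ C₁ B₁ D₁ ∈ 𝒜) : D₁ = B₁ * Y * C₁ := by
      have := eq_mul_inv_mul_of_rank_fromBlocks_le (isUnit_nonsing_inv_iff.2 hY) (hr _ h₁)
      rwa [nonsing_inv_nonsing_inv _ ((isUnit_iff_isUnit_det Y).1 hY)] at this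
    have h₁ := 𝒜.add_mem h₀ h
    have h₂ := 𝒜.add_mem h₀ h'
    have h₃ := 𝒜.add_mem h₁ h'
    simp only [fromBlocks_add, add_zero] at h₁ h₂ h₃
    have polarization : B * Y * C' + B' * Y * C = (B₀ + B + B') * Y * (C₀ + C + C')
        - (B₀ + B) * Y * (C₀ + C) - (B₀ + B') * Y * (C₀ + C') + B₀ * Y * C₀ := by
      simp only [Matrix.add_mul, Matrix.mul_add]
      abel
    rw [polarization, ← schur h₀, ← schur h₁, ← schur h₂, ← schur h₃]
    abel
  | zero => simp
  | add Y Z _ _ hY hZ =>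
    simp only [Matrix.mul_add, Matrix.add_mul]
    rw [add_add_add_comm, hY, hZ, add_zero]
  | smul a Y _ hY => simp only [Matrix.mul_smul, Matrix.smul_mul, ← smul_add, hY, smul_zero]

/-- Adding to an element with invertible top-left block `X` arbitrary top-right blocks `C'` turns
`D = B * X⁻¹ * C` into `D = B * X⁻¹ * (C + C')`, so `B = 0`; such elements and those with zero
top-left block generate `𝒜`. -/
lemma submatrix_inr_eq_zero (hr : ∀ A ∈ 𝒜, A.rank ≤ Fintype.card ι)
    (hsurj : ∀ X, ∃ C B D, fromBlocks X C B D ∈ 𝒜)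
    (hfree : ∀ C, fromBlocks 0 C 0 0 ∈ 𝒜) {A : Matrix (ι ⊕ κ) (ι ⊕ κ) K} (hA : A ∈ 𝒜) :
    A.submatrix Sum.inr id = 0 := by
  classical
  let bottom := submatrixLinearMap K (α := ι ⊕ κ) (β := ι ⊕ κ) Sum.inr id
  let topLeft := submatrixLinearMap K (α := ι ⊕ κ) (β := ι ⊕ κ) Sum.inl Sum.inl
  have bottom_of_isUnit {A} (hA : A ∈ 𝒜) (hX : IsUnit (topLeft A)) : bottom A = 0 := by
    obtain ⟨X, C, B, D, rfl⟩ : ∃ X C B D, A = fromBlocks X C B D :=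
      ⟨_, _, _, _, (fromBlocks_toBlocks A).symm⟩
    replace hX : IsUnit X := hX
    have hD := eq_mul_inv_mul_of_rank_fromBlocks_le hX (hr _ hA)
    have hBX (C' : Matrix ι κ K) : B * X⁻¹ * C' = 0 := by
      have hmem := 𝒜.add_mem hA (hfree C')
      simp only [fromBlocks_add, add_zero] at hmem
      have hD' := eq_mul_inv_mul_of_rank_fromBlocks_le hX (hr _ hmem)
      rwa [Matrix.mul_add, ← hD, left_eq_add] at hD'
    have hB : B * X⁻¹ = 0 := by
      ext k i
      simpa using congrFun₂ (hBX (single i k 1)) k k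
    have hB0 : B = 0 := by
      rw [← nonsing_inv_mul_cancel_right X B ((isUnit_iff_isUnit_det X).1 hX), hB, Matrix.zero_mul]
    subst hB0
    rw [hB, Matrix.zero_mul] at hD
    subst hD
    ext k (i | l) <;> rfl
  have exists_bottom_eq_zero (X : Matrix ι ι K) : X ∈ (𝒜 ⊓ LinearMap.ker bottom).map topLeft := by
    have hX : X ∈ Submodule.span K {X : Matrix ι ι K | IsUnit X} :=
      span_isUnit_eq_top (K := K) (ι := ι) ▸ Submodule.mem_top
    refine Submodule.span_le.2 (fun X (hX : IsUnit X) ↦ ?_) hX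
    obtain ⟨C, B, D, hA⟩ := hsurj X
    exact ⟨_, ⟨hA, bottom_of_isUnit hA hX⟩, rfl⟩
  obtain ⟨A₁, ⟨hA₁, hbottom₁⟩, h₁⟩ := exists_bottom_eq_zero (1 - topLeft A)
  have hsum : bottom (A + A₁) = 0 :=
    bottom_of_isUnit (𝒜.add_mem hA hA₁) (by rw [map_add, h₁, add_sub_cancel]; exact isUnit_one)
  rwa [map_add, hbottom₁, add_zero] at hsum

/-- For `B = single k i 1` one has `C = 0`: by a `2 × 2` minor if `ι = {i}`, and otherwise by the
polarised identity for `B` and `single k i' 1` with `i' ≠ i`. -/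
lemma exists_fromBlocks_bottomLeft_mem [Nonempty ι] [Nonempty κ]
    (hr : ∀ A ∈ 𝒜, A.rank ≤ Fintype.card ι) (hsurj : ∀ X, ∃ C B D, fromBlocks X C B D ∈ 𝒜)
    (hlift : ∀ B, ∃ C, fromBlocks 0 C B (B * C) ∈ 𝒜) :
    ∃ B ≠ 0, fromBlocks 0 0 B 0 ∈ 𝒜 := by
  classical
  let i := Classical.arbitrary ι
  let k := Classical.arbitrary κ
  let B : Matrix κ ι K := single k i 1
  obtain ⟨C, hC⟩ := hlift B
  suffices hC0 : C = 0 by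
    rw [hC0, Matrix.mul_zero] at hC
    exact ⟨B, fun h ↦ by simpa [B] using congrFun₂ h k i, hC⟩
  ext j l
  obtain hι | hι := subsingleton_or_nontrivial ι
  · by_contra hjl
    have hil : C i l ≠ 0 := Subsingleton.elim j i ▸ hjl
    have hdet : ((fromBlocks 0 C B (B * C)).submatrix
        ![Sum.inl i, Sum.inr k] ![Sum.inl i, Sum.inr l]).det ≠ 0 := by
      rw [det_fin_two]
      simpa [B] using hil
    have hrank := (rank_of_det_ne_zero hdet).ge.trans ((rank_submatrix_le _ _ _).trans (hr _ hC))
    rw [Fintype.card_fin] at hrank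
    have := Fintype.card_le_one_iff_subsingleton.2 hι
    omega
  · obtain ⟨i', hi'⟩ := exists_ne i
    obtain ⟨C', hC'⟩ := hlift (single k i' 1)
    have hrow := congrFun₂ (mul_mul_add_mul_mul_eq_zero hr hsurj hC hC' (single i' j 1)) k l
    simpa [B, hi'.symm] using hrow

/-- The elements of `𝒜` are supported on the rows indexed by `ι`, so killing one of these rows
decreases the rank. -/
lemma exists_le_rank_lt_of_forall_fromBlocks_mem [Nonempty ι]
    (hr : ∀ A ∈ 𝒜, A.rank ≤ Fintype.card ι) (hsurj : ∀ X, ∃ C B D, fromBlocks X C B D ∈ 𝒜)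
    (hfree : ∀ C, fromBlocks 0 C 0 0 ∈ 𝒜) :
    ∃ 𝒜' ≤ 𝒜, finrank K 𝒜 ≤ finrank K 𝒜' + (Fintype.card ι + Fintype.card κ) ∧
      ∀ A ∈ 𝒜', A.rank < Fintype.card ι := by
  classical
  let i := Classical.arbitrary ι
  let row := submatrixLinearMap K (β := ι ⊕ κ) (fun _ : Unit ↦ (Sum.inl i : ι ⊕ κ)) id
  refine ⟨𝒜 ⊓ LinearMap.ker row, inf_le_left, ?_, fun A ⟨hA, hrow⟩ ↦ ?_⟩
  · have hker := finrank_map_add_finrank_inf_ker row 𝒜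
    have hmap := Submodule.finrank_le (𝒜.map row)
    rw [finrank_matrix, finrank_self, Fintype.card_unit, Fintype.card_sum, one_mul, mul_one]
      at hmap
    omega
  · have hsupp : Function.support A.row ⊆
        ((Finset.univ.erase i).map Function.Embedding.inl : Finset (ι ⊕ κ)) := by
      rintro (j | k) hj
      · have hji : j ≠ i := by
          rintro rfl
          exact hj (congrFun hrow ())
        simpa using hji
      · exact absurd (congrFun (submatrix_inr_eq_zero hr hsurj hfree hA) k) hj
    have hrank := rank_le_card_of_support_subset A _ hsupp
    rw [Finset.card_map, Finset.card_erase_of_mem (Finset.mem_univ i), Finset.card_univ] at hrank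
    have := Fintype.card_pos (α := ι)
    omega

variable [DecidableEq ι]

lemma eq_mul_of_fromBlocks_zero_mem (hP : fromBlocks 1 0 0 0 ∈ 𝒜)
    (hr : ∀ A ∈ 𝒜, A.rank ≤ Fintype.card ι) {C : Matrix ι κ K} {B : Matrix κ ι K}
    {D : Matrix κ κ K} (h : fromBlocks 0 C B D ∈ 𝒜) : D = B * C := by
  have hmem := 𝒜.add_mem hP h
  simp only [fromBlocks_add, add_zero, zero_add] at hmem
  simpa using eq_mul_inv_mul_of_rank_fromBlocks_le isUnit_one (hr _ hmem)

lemma mem_topRightBlocks_iff_fromBlocks_mem (hP : fromBlocks 1 0 0 0 ∈ 𝒜)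
    (hr : ∀ A ∈ 𝒜, A.rank ≤ Fintype.card ι) {C : Matrix ι κ K} :
    C ∈ topRightBlocks 𝒜 ↔ fromBlocks 0 C 0 0 ∈ 𝒜 := by
  refine mem_topRightBlocks.trans ⟨fun ⟨D, h⟩ ↦ ?_, fun h ↦ ⟨0, h⟩⟩
  have hD := eq_mul_of_fromBlocks_zero_mem hP hr h
  rwa [hD, Matrix.zero_mul] at h

lemma mul_eq_zero_of_mem_blocks (hP : fromBlocks 1 0 0 0 ∈ 𝒜)
    (hr : ∀ A ∈ 𝒜, A.rank ≤ Fintype.card ι) {B : Matrix κ ι K} (hB : B ∈ bottomLeftBlocks 𝒜)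
    {C : Matrix ι κ K} (hC : C ∈ topRightBlocks 𝒜) : B * C = 0 := by
  rw [mem_topRightBlocks_iff_fromBlocks_mem hP hr] at hC
  obtain ⟨C', D, h⟩ := mem_bottomLeftBlocks.1 hB
  have hmem := 𝒜.add_mem h hC
  simp only [fromBlocks_add, add_zero] at hmem
  have hD := eq_mul_of_fromBlocks_zero_mem hP hr hmem
  rwa [eq_mul_of_fromBlocks_zero_mem hP hr h, Matrix.mul_add, left_eq_add] at hD

lemma finrank_eq_add_finrank_blocks (hP : fromBlocks 1 0 0 0 ∈ 𝒜)
    (hr : ∀ A ∈ 𝒜, A.rank ≤ Fintype.card ι) :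
    finrank K 𝒜 = finrank K (𝒜.map (submatrixLinearMap K Sum.inl Sum.inl)) +
      (finrank K (bottomLeftBlocks 𝒜) + finrank K (topRightBlocks 𝒜)) := by
  let topLeft := submatrixLinearMap K (Sum.inl : ι → ι ⊕ κ) (Sum.inl : ι → ι ⊕ κ)
  let topRight := submatrixLinearMap K (Sum.inl : ι → ι ⊕ κ) (Sum.inr : κ → ι ⊕ κ)
  let bottomLeft := submatrixLinearMap K (Sum.inr : κ → ι ⊕ κ) (Sum.inl : ι → ι ⊕ κ)
  have hbot :
      𝒜 ⊓ LinearMap.ker topLeft ⊓ LinearMap.ker bottomLeft ⊓ LinearMap.ker topRight = ⊥ := by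
    rw [eq_bot_iff]
    rintro A ⟨⟨⟨hA, h₁₁ : A.toBlocks₁₁ = 0⟩, h₂₁ : A.toBlocks₂₁ = 0⟩, h₁₂ : A.toBlocks₁₂ = 0⟩
    rw [SetLike.mem_coe, ← fromBlocks_toBlocks A, h₁₁, h₂₁, h₁₂] at hA
    have h₂₂ := eq_mul_of_fromBlocks_zero_mem hP hr hA
    rw [Submodule.mem_bot, ← fromBlocks_toBlocks A, h₁₁, h₂₁, h₁₂, h₂₂, Matrix.mul_zero,
      fromBlocks_zero]
  rw [← finrank_map_add_finrank_inf_ker topLeft 𝒜,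
    ← finrank_map_add_finrank_inf_ker bottomLeft (𝒜 ⊓ _),
    ← finrank_map_add_finrank_inf_ker topRight (𝒜 ⊓ _ ⊓ _), hbot, finrank_bot, add_zero]
  rfl

/-- This is the bound of Dieudonné on the dimension of a space of matrices of bounded rank. -/
lemma finrank_le_of_fromBlocks_one_mem (hP : fromBlocks 1 0 0 0 ∈ 𝒜)
    (hr : ∀ A ∈ 𝒜, A.rank ≤ Fintype.card ι) :
    finrank K 𝒜 ≤ Fintype.card ι * (Fintype.card ι + Fintype.card κ) := by
  have hblocks := finrank_eq_add_finrank_blocks hP hr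
  have htrace := finrank_add_finrank_le_of_mul_eq_zero
    (fun B (hB : B ∈ bottomLeftBlocks 𝒜) C hC ↦ mul_eq_zero_of_mem_blocks hP hr hB hC)
  have htop := Submodule.finrank_le (𝒜.map (submatrixLinearMap K Sum.inl Sum.inl))
  rw [finrank_matrix, finrank_self, mul_one] at htop
  rw [mul_add]
  omega

lemma finrank_blocks_of_le_finrank (hP : fromBlocks 1 0 0 0 ∈ 𝒜)
    (hr : ∀ A ∈ 𝒜, A.rank ≤ Fintype.card ι)
    (hdim : Fintype.card ι * (Fintype.card ι + Fintype.card κ) ≤ finrank K 𝒜) :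
    (∀ X, ∃ C B D, fromBlocks X C B D ∈ 𝒜) ∧
      finrank K (bottomLeftBlocks 𝒜) + finrank K (topRightBlocks 𝒜) =
        Fintype.card ι * Fintype.card κ := by
  have hblocks := finrank_eq_add_finrank_blocks hP hr
  have htrace := finrank_add_finrank_le_of_mul_eq_zero
    (fun B (hB : B ∈ bottomLeftBlocks 𝒜) C hC ↦ mul_eq_zero_of_mem_blocks hP hr hB hC)
  have htop := Submodule.finrank_le (𝒜.map (submatrixLinearMap K Sum.inl Sum.inl))
  have hdim_top : finrank K (Matrix ι ι K) = Fintype.card ι * Fintype.card ι := by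
    rw [finrank_matrix, finrank_self, mul_one]
  rw [mul_add] at hdim
  have htop_eq : 𝒜.map (submatrixLinearMap K Sum.inl Sum.inl) = ⊤ :=
    Submodule.eq_top_of_finrank_eq (by omega)
  refine ⟨fun X ↦ ?_, by omega⟩
  obtain ⟨A, hA, rfl⟩ := htop_eq.ge (Submodule.mem_top (x := X))
  exact ⟨A.toBlocks₁₂, A.toBlocks₂₁, A.toBlocks₂₂, (fromBlocks_toBlocks A).symm ▸ hA⟩

lemma forall_fromBlocks_mem_or (hP : fromBlocks 1 0 0 0 ∈ 𝒜)
    (hr : ∀ A ∈ 𝒜, A.rank ≤ Fintype.card ι) [Nonempty ι] [Nonempty κ]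
    (hdim : Fintype.card ι * (Fintype.card ι + Fintype.card κ) ≤ finrank K 𝒜) :
    (∀ C, fromBlocks 0 C 0 0 ∈ 𝒜) ∨ (∀ B, fromBlocks 0 0 B 0 ∈ 𝒜) := by
  obtain ⟨hsurj, hblocks⟩ := finrank_blocks_of_le_finrank hP hr hdim
  by_cases hbot : topRightBlocks 𝒜 = ⊥
  · right
    have htop : bottomLeftBlocks 𝒜 = ⊤ := by
      apply Submodule.eq_top_of_finrank_eq
      rw [hbot, finrank_bot, add_zero] at hblocks
      rw [hblocks, finrank_matrix, finrank_self, mul_one, mul_comm]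
    have hlift (B) : ∃ C, fromBlocks 0 C B (B * C) ∈ 𝒜 := by
      obtain ⟨C, D, h⟩ := mem_bottomLeftBlocks.1 (htop ▸ Submodule.mem_top : B ∈ bottomLeftBlocks 𝒜)
      exact ⟨C, eq_mul_of_fromBlocks_zero_mem hP hr h ▸ h⟩
    obtain ⟨B₀, hB₀, h₀⟩ := exists_fromBlocks_bottomLeft_mem hr hsurj hlift
    intro B
    obtain ⟨C, h⟩ := hlift B
    have hC : C = 0 := (eq_zero_or_eq_zero_of_forall_mul_mul_eq_zero fun Y ↦ by
      simpa using mul_mul_add_mul_mul_eq_zero hr hsurj h₀ h Y).resolve_left hB₀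
    simpa [hC] using h
  · left
    obtain ⟨C₀, hC₀, hne⟩ := Submodule.exists_mem_ne_zero_of_ne_bot hbot
    rw [mem_topRightBlocks_iff_fromBlocks_mem hP hr] at hC₀
    have hbot' : bottomLeftBlocks 𝒜 = ⊥ := by
      refine (Submodule.eq_bot_iff _).2 fun B hB ↦ ?_
      obtain ⟨C, D, h⟩ := mem_bottomLeftBlocks.1 hB
      exact (eq_zero_or_eq_zero_of_forall_mul_mul_eq_zero fun Y ↦ by
        simpa using mul_mul_add_mul_mul_eq_zero hr hsurj h hC₀ Y).resolve_right hne
    have htop : topRightBlocks 𝒜 = ⊤ := by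
      apply Submodule.eq_top_of_finrank_eq
      rw [hbot', finrank_bot, zero_add] at hblocks
      rw [hblocks, finrank_matrix, finrank_self, mul_one]
    exact fun C ↦ (mem_topRightBlocks_iff_fromBlocks_mem hP hr).1 (htop ▸ Submodule.mem_top)

lemma exists_le_rank_lt_of_fromBlocks_one_mem [Nonempty ι] (hP : fromBlocks 1 0 0 0 ∈ 𝒜)
    (hr : ∀ A ∈ 𝒜, A.rank ≤ Fintype.card ι)
    (hdim : Fintype.card ι * (Fintype.card ι + Fintype.card κ) ≤ finrank K 𝒜) :
    ∃ 𝒜' ≤ 𝒜, finrank K 𝒜 ≤ finrank K 𝒜' + (Fintype.card ι + Fintype.card κ) ∧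
      ∀ A ∈ 𝒜', A.rank < Fintype.card ι := by
  obtain ⟨hsurj, -⟩ := finrank_blocks_of_le_finrank hP hr hdim
  have hdich : (∀ C, fromBlocks 0 C 0 0 ∈ 𝒜) ∨ (∀ B, fromBlocks 0 0 B 0 ∈ 𝒜) := by
    obtain hκ | hκ := isEmpty_or_nonempty κ
    · exact .inl fun C ↦ by simp [Subsingleton.elim C 0]
    · exact forall_fromBlocks_mem_or hP hr hdim
  obtain hfree | hfree := hdich
  · exact exists_le_rank_lt_of_forall_fromBlocks_mem hr hsurj hfree
  · let e := transposeLinearEquiv (ι ⊕ κ) (ι ⊕ κ) K K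
    obtain ⟨𝒜', h𝒜', hfinrank, hlt⟩ := exists_le_rank_lt_of_forall_fromBlocks_mem
      (𝒜 := 𝒜.map e.toLinearMap)
      (by rintro _ ⟨A, hA, rfl⟩; exact (rank_transpose A).trans_le (hr A hA))
      (fun X ↦ by
        obtain ⟨C, B, D, h⟩ := hsurj Xᵀ
        exact ⟨Bᵀ, Cᵀ, Dᵀ, _, h, by simp [e, fromBlocks_transpose]⟩)
      (fun C ↦ ⟨_, hfree Cᵀ, by simp [e, fromBlocks_transpose]⟩)
    refine ⟨𝒜'.map e.symm.toLinearMap, ?_, ?_, ?_⟩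
    · rintro _ ⟨A, hA, rfl⟩
      obtain ⟨A', hA', rfl⟩ := h𝒜' hA
      exact hA'
    · rwa [LinearEquiv.finrank_map_eq, ← LinearEquiv.finrank_map_eq e 𝒜]
    · rintro _ ⟨A, hA, rfl⟩
      exact (rank_transpose A).trans_lt (hlt A hA)

end BlockSpaces

section Anticodes

open Matrix

variable {K : Type*} [Field K] {a b : ℕ} {𝒜 : Submodule K (Matrix (Fin a) (Fin b) K)}

lemma exists_rank_preserving_map_eq_fromBlocks_one (hba : b ≤ a) {r : ℕ}
    {P : Matrix (Fin a) (Fin b) K} (hP : P.rank = r) :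
    ∃ Φ : Matrix (Fin a) (Fin b) K →ₗ[K]
        Matrix (Fin r ⊕ Fin (a - r)) (Fin r ⊕ Fin (a - r)) K,
      (∀ A, (Φ A).rank = A.rank) ∧ Φ P = fromBlocks 1 0 0 0 := by
  let pad : Matrix (Fin b) (Fin a) K := (1 : Matrix (Fin a) (Fin a) K).submatrix (Fin.castLE hba) id
  have mul_pad_submatrix (A : Matrix (Fin a) (Fin b) K) :
      (A * pad).submatrix id (Fin.castLE hba) = A := by
    ext i j
    simp [pad, mul_apply, one_apply]
  have rank_mul_pad (A : Matrix (Fin a) (Fin b) K) : (A * pad).rank = A.rank := by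
    refine (rank_mul_le_left A pad).antisymm ?_
    conv_lhs => rw [← mul_pad_submatrix A]
    exact rank_submatrix_le _ _ _
  have hnormal := exists_rank_normal_form (P * pad)
  rw [rank_mul_pad, hP, Fintype.card_fin] at hnormal
  obtain ⟨V, U, e, hV, hU, hVU⟩ := hnormal
  refine ⟨submatrixLinearMap K e.symm e.symm ∘ₗ mulRightLinearMap _ K U ∘ₗ
    mulLeftLinearMap _ K V ∘ₗ mulRightLinearMap _ K pad, fun A ↦ ?_, ?_⟩
  · change ((V * (A * pad) * U).submatrix e.symm e.symm).rank = A.rank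
    rw [rank_submatrix, rank_mul_eq_left_of_isUnit_det _ _ ((isUnit_iff_isUnit_det U).1 hU),
      rank_mul_eq_right_of_isUnit_det _ _ ((isUnit_iff_isUnit_det V).1 hV), rank_mul_pad]
  · change (V * (P * pad) * U).submatrix e.symm e.symm = _
    rw [hVU, submatrix_submatrix, Equiv.self_comp_symm, submatrix_id_id]

lemma bddAbove_rank (𝒜 : Submodule K (Matrix (Fin a) (Fin b) K)) :
    BddAbove {w | ∃ A ∈ 𝒜, A.rank = w} := by
  refine ⟨b, ?_⟩
  rintro _ ⟨A, -, rfl⟩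
  exact A.rank_le_width

lemma rank_le_maxrank {A : Matrix (Fin a) (Fin b) K} (hA : A ∈ 𝒜) : A.rank ≤ maxrank 𝒜 :=
  le_csSup (bddAbove_rank 𝒜) ⟨A, hA, rfl⟩

lemma exists_rank_eq_maxrank (𝒜 : Submodule K (Matrix (Fin a) (Fin b) K)) :
    ∃ A ∈ 𝒜, A.rank = maxrank 𝒜 :=
  Nat.sSup_mem (s := {w | ∃ A ∈ 𝒜, A.rank = w}) ⟨_, 0, 𝒜.zero_mem, rfl⟩ (bddAbove_rank 𝒜)

lemma maxrank_le_width (𝒜 : Submodule K (Matrix (Fin a) (Fin b) K)) : maxrank 𝒜 ≤ b := by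
  obtain ⟨A, -, hA⟩ := exists_rank_eq_maxrank 𝒜
  exact hA ▸ A.rank_le_width

lemma finrank_map_eq_of_forall_rank_eq {α β : Type*} [Fintype β]
    {Φ : Matrix (Fin a) (Fin b) K →ₗ[K] Matrix α β K} (hΦ : ∀ A, (Φ A).rank = A.rank)
    (S : Submodule K (Matrix (Fin a) (Fin b) K)) : finrank K (S.map Φ) = finrank K S := by
  have hinj : Function.Injective Φ := by
    refine (injective_iff_map_eq_zero Φ).2 fun A hA ↦ ?_
    have hrank := hΦ A
    rw [hA, rank_zero, eq_comm, Matrix.rank, Submodule.finrank_eq_zero, LinearMap.range_eq_bot]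
      at hrank
    exact toLin'.map_eq_zero_iff.1 hrank
  exact (Submodule.equivMapOfInjective Φ hinj S).symm.finrank_eq

lemma exists_rank_preserving_map_fromBlocks_one_mem (hba : b ≤ a)
    (𝒜 : Submodule K (Matrix (Fin a) (Fin b) K)) :
    ∃ Φ : Matrix (Fin a) (Fin b) K →ₗ[K] Matrix (Fin (maxrank 𝒜) ⊕ Fin (a - maxrank 𝒜))
        (Fin (maxrank 𝒜) ⊕ Fin (a - maxrank 𝒜)) K,
      (∀ A, (Φ A).rank = A.rank) ∧ fromBlocks 1 0 0 0 ∈ 𝒜.map Φ ∧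
        ∀ B ∈ 𝒜.map Φ, B.rank ≤ Fintype.card (Fin (maxrank 𝒜)) := by
  obtain ⟨P, hP, hrank⟩ := exists_rank_eq_maxrank 𝒜
  obtain ⟨Φ, hΦ, hΦP⟩ := exists_rank_preserving_map_eq_fromBlocks_one hba hrank
  refine ⟨Φ, hΦ, ⟨P, hP, hΦP⟩, ?_⟩
  rintro _ ⟨A, hA, rfl⟩
  rw [hΦ, Fintype.card_fin]
  exact rank_le_maxrank hA

lemma finrank_le_mul_maxrank (hba : b ≤ a) (𝒜 : Submodule K (Matrix (Fin a) (Fin b) K)) :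
    finrank K 𝒜 ≤ a * maxrank 𝒜 := by
  obtain ⟨Φ, hΦ, hP, hr⟩ := exists_rank_preserving_map_fromBlocks_one_mem hba 𝒜
  have hle := finrank_le_of_fromBlocks_one_mem hP hr
  rwa [finrank_map_eq_of_forall_rank_eq hΦ, Fintype.card_fin, Fintype.card_fin,
    Nat.add_sub_cancel' ((maxrank_le_width 𝒜).trans hba), mul_comm] at hle

lemma exists_le_maxrank_lt (hba : b ≤ a) (h𝒜 : IsOptAnticode 𝒜) (hpos : 0 < maxrank 𝒜) :
    ∃ 𝒜' ≤ 𝒜, finrank K 𝒜 ≤ finrank K 𝒜' + a ∧ maxrank 𝒜' < maxrank 𝒜 := by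
  have hmax := Nat.add_sub_cancel' ((maxrank_le_width 𝒜).trans hba)
  have : Nonempty (Fin (maxrank 𝒜)) := ⟨0, hpos⟩
  obtain ⟨Φ, hΦ, hP, hr⟩ := exists_rank_preserving_map_fromBlocks_one_mem hba 𝒜
  have hdim : finrank K (𝒜.map Φ) = a * maxrank 𝒜 :=
    (finrank_map_eq_of_forall_rank_eq hΦ 𝒜).trans h𝒜
  obtain ⟨ℬ, hℬ, hfinrank, hlt⟩ := exists_le_rank_lt_of_fromBlocks_one_mem hP hr
    (by rw [hdim, Fintype.card_fin, Fintype.card_fin, hmax, mul_comm])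
  have hmap : (𝒜 ⊓ ℬ.comap Φ).map Φ = ℬ := by
    rw [← Submodule.map_inf_eq_map_inf_comap, inf_eq_right.2 hℬ]
  refine ⟨𝒜 ⊓ ℬ.comap Φ, inf_le_left, ?_, ?_⟩
  · rwa [← hmap, finrank_map_eq_of_forall_rank_eq hΦ, finrank_map_eq_of_forall_rank_eq hΦ,
      Fintype.card_fin, Fintype.card_fin, hmax] at hfinrank
  · obtain ⟨A, hA, hrank⟩ := exists_rank_eq_maxrank (𝒜 ⊓ ℬ.comap Φ)
    simpa [← hrank, hΦ] using hlt (Φ A) hA.2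

lemma exists_isOptAnticode_le (hba : b ≤ a) (h𝒜 : IsOptAnticode 𝒜) (hpos : 0 < maxrank 𝒜) :
    ∃ 𝒜' ≤ 𝒜, IsOptAnticode 𝒜' ∧ maxrank 𝒜' + 1 = maxrank 𝒜 := by
  obtain ⟨𝒜', hle, hfinrank, hlt⟩ := exists_le_maxrank_lt hba h𝒜 hpos
  have hbound := finrank_le_mul_maxrank hba 𝒜'
  have ha : 0 < a := hpos.trans_le ((maxrank_le_width 𝒜).trans hba)
  rw [show finrank K 𝒜 = a * maxrank 𝒜 from h𝒜] at hfinrank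
  have hmax : maxrank 𝒜' + 1 = maxrank 𝒜 := by
    refine (Nat.succ_le_of_lt hlt).antisymm (Nat.le_of_mul_le_mul_left ?_ ha)
    rw [Nat.mul_succ]
    omega
  refine ⟨𝒜', hle, hbound.antisymm ?_, hmax⟩
  rw [← hmax, mul_add_one] at hfinrank
  omega

lemma maxrank_top (hba : b ≤ a) : maxrank (⊤ : Submodule K (Matrix (Fin a) (Fin b) K)) = b := by
  refine (maxrank_le_width _).antisymm ?_
  let A : Matrix (Fin a) (Fin b) K := (1 : Matrix (Fin a) (Fin a) K).submatrix id (Fin.castLE hba)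
  have hA : A.submatrix (Fin.castLE hba) id = 1 := by
    ext i j
    simp [A, one_apply]
  have hrank := rank_submatrix_le A (Fin.castLE hba) id
  rw [hA, rank_one, Fintype.card_fin] at hrank
  exact hrank.trans (rank_le_maxrank Submodule.mem_top)

lemma isOptAnticode_top (hba : b ≤ a) :
    IsOptAnticode (⊤ : Submodule K (Matrix (Fin a) (Fin b) K)) := by
  simp [IsOptAnticode, maxrank_top hba, finrank_matrix]

end Anticodes

section Codes

variable {K : Type*} [Field K] {t : ℕ} {m n : Fin t → ℕ}
  {𝒞 𝒟 ℰ : Submodule K (∀ i : Fin t, Matrix (Fin (m i)) (Fin (n i)) K)}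

lemma maxsrk_pi (𝒜 : ∀ i : Fin t, Submodule K (Matrix (Fin (m i)) (Fin (n i)) K)) :
    maxsrk (Submodule.pi Set.univ 𝒜) = ∑ i, maxrank (𝒜 i) := by
  choose C hC hrank using fun i ↦ exists_rank_eq_maxrank (𝒜 i)
  refine IsGreatest.csSup_eq
    ⟨⟨C, fun i _ ↦ hC i, Finset.sum_congr rfl fun i _ ↦ hrank i⟩, ?_⟩
  rintro _ ⟨C', hC', rfl⟩
  exact Finset.sum_le_sum fun i _ ↦ rank_le_maxrank (hC' i trivial)

lemma codeWt_le {𝒜 : ∀ i : Fin t, Submodule K (Matrix (Fin (m i)) (Fin (n i)) K)}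
    (h𝒜 : ∀ i, IsOptAnticode (𝒜 i)) (h𝒞 : 𝒞 ≤ Submodule.pi Set.univ 𝒜) :
    codeWt 𝒞 ≤ ∑ i, maxrank (𝒜 i) :=
  Nat.sInf_le ⟨𝒜, h𝒜, h𝒞, maxsrk_pi 𝒜⟩

lemma exists_sum_maxrank_eq_codeWt (hmn : ∀ i, n i ≤ m i)
    (𝒞 : Submodule K (∀ i : Fin t, Matrix (Fin (m i)) (Fin (n i)) K)) :
    ∃ 𝒜 : ∀ i : Fin t, Submodule K (Matrix (Fin (m i)) (Fin (n i)) K),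
      (∀ i, IsOptAnticode (𝒜 i)) ∧ 𝒞 ≤ Submodule.pi Set.univ 𝒜 ∧
        ∑ i, maxrank (𝒜 i) = codeWt 𝒞 := by
  simp only [← maxsrk_pi]
  exact Nat.sInf_mem (s := {w | ∃ 𝒜 : ∀ i : Fin t, Submodule K _, (∀ i, IsOptAnticode (𝒜 i)) ∧
    𝒞 ≤ Submodule.pi Set.univ 𝒜 ∧ maxsrk (Submodule.pi Set.univ 𝒜) = w})
    ⟨_, ⊤, fun i ↦ isOptAnticode_top (hmn i), fun _ _ _ _ ↦ trivial, rfl⟩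

lemma codeWt_le_sum (hmn : ∀ i, n i ≤ m i)
    (𝒞 : Submodule K (∀ i : Fin t, Matrix (Fin (m i)) (Fin (n i)) K)) :
    codeWt 𝒞 ≤ ∑ i, n i :=
  (codeWt_le (𝒜 := ⊤) (fun i ↦ isOptAnticode_top (hmn i)) fun _ _ _ _ ↦ trivial).trans
    (Finset.sum_le_sum fun _ _ ↦ maxrank_le_width _)

lemma minDist_le_codeWt (hmn : ∀ i, n i ≤ m i) (hle : 𝒞 ≤ 𝒟) (h𝒞 : 𝒞 ≠ ⊥) :
    minDist 𝒟 ≤ codeWt 𝒞 := by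
  obtain ⟨𝒜, -, h𝒞𝒜, hsum⟩ := exists_sum_maxrank_eq_codeWt hmn 𝒞
  obtain ⟨C, hC, hC0⟩ := Submodule.exists_mem_ne_zero_of_ne_bot h𝒞
  calc
    minDist 𝒟 ≤ srk C := Nat.sInf_le ⟨C, hle hC, hC0, rfl⟩
    _ ≤ ∑ i, maxrank (𝒜 i) := Finset.sum_le_sum fun i _ ↦ rank_le_maxrank (h𝒞𝒜 hC i trivial)
    _ = codeWt 𝒞 := hsum

lemma gw_le_codeWt {r : ℕ} (hle : ℰ ≤ 𝒞) (hr : r ≤ finrank K ℰ) : gw 𝒞 r ≤ codeWt ℰ :=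
  Nat.sInf_le ⟨ℰ, hle, hr, rfl⟩

lemma exists_codeWt_eq_gw {r : ℕ} (hr : r ≤ finrank K 𝒞) :
    ∃ ℰ ≤ 𝒞, r ≤ finrank K ℰ ∧ codeWt ℰ = gw 𝒞 r :=
  Nat.sInf_mem (s := {w | ∃ ℰ : Submodule K _, ℰ ≤ 𝒞 ∧ r ≤ finrank K ℰ ∧ codeWt ℰ = w})
    ⟨_, 𝒞, le_rfl, hr, rfl⟩

lemma gw_mono {r s : ℕ} (hrs : r ≤ s) (hs : s ≤ finrank K 𝒞) : gw 𝒞 r ≤ gw 𝒞 s := by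
  obtain ⟨ℰ, hℰ, hsℰ, hwt⟩ := exists_codeWt_eq_gw hs
  exact hwt ▸ gw_le_codeWt hℰ (hrs.trans hsℰ)

lemma gw_le_sum (hmn : ∀ i, n i ≤ m i) {r : ℕ} (hr : r ≤ finrank K 𝒞) :
    gw 𝒞 r ≤ ∑ i, n i :=
  (gw_le_codeWt le_rfl hr).trans (codeWt_le_sum hmn 𝒞)

lemma minDist_le_gw (hmn : ∀ i, n i ≤ m i) (hle : 𝒞 ≤ 𝒟) {r : ℕ} (hr0 : 0 < r)
    (hr : r ≤ finrank K 𝒞) : minDist 𝒟 ≤ gw 𝒞 r := by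
  obtain ⟨ℰ, hℰ, hrℰ, hwt⟩ := exists_codeWt_eq_gw hr
  refine hwt ▸ minDist_le_codeWt hmn (hℰ.trans hle) ?_
  rintro rfl
  exact (hr0.trans_le hrℰ).ne' (finrank_bot K _)

end Codes

section Multiplicities

variable {K : Type*} [Field K] {t : ℕ} {m n : Fin t → ℕ}
  {𝒞 𝒟 ℰ : Submodule K (∀ i : Fin t, Matrix (Fin (m i)) (Fin (n i)) K)}

lemma exists_pos_maxrank_sum_le
    {𝒜 : ∀ i : Fin t, Submodule K (Matrix (Fin (m i)) (Fin (n i)) K)}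
    (hpos : 0 < ∑ i, maxrank (𝒜 i)) :
    ∃ i, 0 < maxrank (𝒜 i) ∧ ∑ i, maxrank (𝒜 i) ≤ ∑ k ∈ Finset.Iic i, n k := by
  obtain ⟨i, hi⟩ := exists_mem_blockColumns hpos le_rfl
  obtain ⟨hlt, hle⟩ := Finset.mem_Ioc.1 hi
  rw [← Finset.sum_Iio_add_eq_sum_Iic] at hle
  refine ⟨i, Nat.pos_of_lt_add_right (hlt.trans_le hle), (Finset.mem_Ioc.1 hi).2.trans ?_⟩
  exact Finset.sum_le_sum fun k _ ↦ maxrank_le_width (𝒜 k)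

-- Lower by one the maximum rank of the last nonzero factor of an anticode of minimal weight.
lemma exists_codeWt_lt_finrank_le_add (hm : Antitone m) (hmn : ∀ i, n i ≤ m i)
    (hpos : 0 < codeWt ℰ) :
    ∃ ℰ' ≤ ℰ, codeWt ℰ' < codeWt ℰ ∧
      finrank K ℰ ≤ finrank K ℰ' + columnHeight m n (codeWt ℰ) := by
  classical
  obtain ⟨𝒜, h𝒜, hℰ, hsum⟩ := exists_sum_maxrank_eq_codeWt hmn ℰ
  rw [← hsum] at hpos ⊢
  obtain ⟨i, hi, hcol⟩ := exists_pos_maxrank_sum_le hpos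
  obtain ⟨ℬ, hℬ, hℬopt, hmax⟩ := exists_isOptAnticode_le (hmn i) (h𝒜 i) hi
  let proj := LinearMap.proj (R := K) (φ := fun i ↦ Matrix (Fin (m i)) (Fin (n i)) K) i
  refine ⟨ℰ ⊓ ℬ.comap proj, inf_le_left, ?_, ?_⟩
  · have hopt : ∀ k, IsOptAnticode (Function.update 𝒜 i ℬ k) :=
      (Function.forall_update_iff 𝒜 fun _ 𝒜 ↦ IsOptAnticode 𝒜).2 ⟨hℬopt, fun k _ ↦ h𝒜 k⟩
    have hle : ℰ ⊓ ℬ.comap proj ≤ Submodule.pi Set.univ (Function.update 𝒜 i ℬ) := fun C hC k _ ↦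
      (Function.forall_update_iff 𝒜 fun k 𝒜 ↦ C k ∈ 𝒜).2 ⟨hC.2, fun k _ ↦ hℰ hC.1 k trivial⟩ k
    refine (codeWt_le hopt hle).trans_lt
      (Finset.sum_lt_sum (fun k _ ↦ ?_) ⟨i, Finset.mem_univ i, ?_⟩)
    · obtain rfl | hk := eq_or_ne k i
      · rw [Function.update_self]; omega
      · rw [Function.update_of_ne hk]
    · rw [Function.update_self]; omega
  · have hdim := finrank_add_le_finrank_inf_comap_add proj (S := ℰ) (A := 𝒜 i)
      (Submodule.map_le_iff_le_comap.2 fun C hC ↦ hℰ hC i trivial) hℬ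
    have hheight := le_columnHeight hm hpos hcol
    rw [show finrank K ℬ = _ from hℬopt, show finrank K (𝒜 i) = _ from h𝒜 i, ← hmax, mul_add_one]
      at hdim
    omega

lemma gw_lt_of_add_columnHeight_le (hm : Antitone m) (hmn : ∀ i, n i ≤ m i) {r s w : ℕ}
    (hs : s ≤ finrank K 𝒞) (hw : gw 𝒞 s = w) (hpos : 0 < w)
    (hrs : r + columnHeight m n w ≤ s) : gw 𝒞 r < w := by
  obtain ⟨ℰ, hℰ, hsℰ, rfl⟩ := hw ▸ exists_codeWt_eq_gw hs
  obtain ⟨ℰ', hℰ', hlt, hfinrank⟩ := exists_codeWt_lt_finrank_le_add hm hmn hpos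
  exact (gw_le_codeWt (hℰ'.trans hℰ) (by omega)).trans_lt hlt

lemma card_gw_eq_le_columnHeight (hm : Antitone m) (hmn : ∀ i, n i ≤ m i)
    (𝒞 : Submodule K (∀ i : Fin t, Matrix (Fin (m i)) (Fin (n i)) K)) {w : ℕ} (hw : 0 < w) :
    Finset.card {r : Fin (finrank K 𝒞) | gw 𝒞 (r + 1) = w} ≤ columnHeight m n w := by
  refine card_le_of_forall_lt_add fun r hr s hs ↦ lt_of_not_ge fun hrs ↦ ?_
  simp only [Finset.mem_filter_univ] at hr hs
  exact (gw_lt_of_add_columnHeight_le hm hmn s.2 hs hw (by omega)).ne hr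

lemma gw_mem_Icc (hmn : ∀ i, n i ≤ m i) (hle : 𝒞 ≤ 𝒟) (r : Fin (finrank K 𝒞)) :
    gw 𝒞 (r + 1) ∈ Finset.Icc (minDist 𝒟) (∑ i, n i) :=
  Finset.mem_Icc.2 ⟨minDist_le_gw hmn hle r.1.succ_pos r.2, gw_le_sum hmn r.2⟩

lemma IsMSRD.minDist_pos (h𝒟 : IsMSRD 𝒟) : 0 < minDist 𝒟 := by
  obtain ⟨j, δ, -, hdist, -⟩ := h𝒟
  exact hdist ▸ Nat.succ_pos _

lemma IsMSRD.sum_columnHeight_le (h𝒟 : IsMSRD 𝒟) :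
    ∑ w ∈ Finset.Icc (minDist 𝒟) (∑ i, n i), columnHeight m n w ≤ finrank K 𝒟 := by
  obtain ⟨j, δ, hδ, hdist, hfinrank⟩ := h𝒟
  have hle := sum_columnHeight_add_le (m := m) (Nat.le_of_succ_le hδ) (∑ i, n i)
  rw [hdist]
  omega

lemma IsMSRD.card_gw_eq_columnHeight (hm : Antitone m) (hmn : ∀ i, n i ≤ m i) (h𝒟 : IsMSRD 𝒟)
    {w : ℕ} (hw : w ∈ Finset.Icc (minDist 𝒟) (∑ i, n i)) :
    Finset.card {r : Fin (finrank K 𝒟) | gw 𝒟 (r + 1) = w} = columnHeight m n w := by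
  have hle : ∀ w ∈ Finset.Icc (minDist 𝒟) (∑ i, n i),
      Finset.card {r : Fin (finrank K 𝒟) | gw 𝒟 (r + 1) = w} ≤ columnHeight m n w := fun w hw ↦
    card_gw_eq_le_columnHeight hm hmn 𝒟 (h𝒟.minDist_pos.trans_le (Finset.mem_Icc.1 hw).1)
  refine (Finset.sum_eq_sum_iff_of_le hle).1 ((Finset.sum_le_sum hle).antisymm ?_) w hw
  rw [← Finset.card_eq_sum_card_fiberwise fun r _ ↦ gw_mem_Icc hmn le_rfl r, Finset.card_univ,
    Fintype.card_fin]
  exact h𝒟.sum_columnHeight_le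

end Multiplicities

theorem gw_subseq_of_MSRD_general {K : Type*} [Field K] {t : ℕ} {m n : Fin t → ℕ}
    (hm : Antitone m) (hmn : ∀ i, n i ≤ m i)
    {𝒞 𝒟 : Submodule K (∀ i : Fin t, Matrix (Fin (m i)) (Fin (n i)) K)}
    (hsub : 𝒞 ≤ 𝒟) (hMSRD : IsMSRD 𝒟) :
    IsSubseq (fun r : Fin (finrank K 𝒞) ↦ gw 𝒞 (r + 1))
      (fun r : Fin (finrank K 𝒟) ↦ gw 𝒟 (r + 1)) := by
  refine isSubseq_of_card_fiber_le (fun r s hrs ↦ gw_mono (Nat.succ_le_succ hrs) s.2)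
    (fun r s hrs ↦ gw_mono (Nat.succ_le_succ hrs) s.2) fun r ↦ ?_
  have hmem := gw_mem_Icc hmn hsub r
  have hpos : 0 < gw 𝒞 (r + 1) := hMSRD.minDist_pos.trans_le (Finset.mem_Icc.1 hmem).1
  exact (card_gw_eq_le_columnHeight hm hmn 𝒞 hpos).trans_eq
    (hMSRD.card_gw_eq_columnHeight hm hmn hmem).symm

/-- If `𝒞 ⊆ 𝒟 ⊆ 𝕄` with `𝒞 ≠ 0` and `𝒟` MSRD, then the sequence of generalized sum-rank
weights of `𝒞` is a subsequence of the sequence of generalized sum-rank weights of `𝒟`. -/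
theorem gw_subseq_of_MSRD (ht : 0 < t)
    (hm_mono : ∀ i j : Fin t, i ≤ j → m j ≤ m i)
    (hn_pos : ∀ i, 0 < n i) (hmn : ∀ i, n i ≤ m i)
    (𝒞 𝒟 : Submodule F (∀ i : Fin t, Matrix (Fin (m i)) (Fin (n i)) F))
    (h𝒞 : 𝒞 ≠ ⊥) (hsub : 𝒞 ≤ 𝒟) (hMSRD : IsMSRD 𝒟) :
    IsSubseq (fun r : Fin (Module.finrank F 𝒞) => gw 𝒞 (r.1 + 1))
      (fun r : Fin (Module.finrank F 𝒟) => gw 𝒟 (r.1 + 1)) :=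
  gw_subseq_of_MSRD_general (fun i j h ↦ hm_mono i j h) hmn hsub hMSRD
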